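/- Let (A,b) be a unital A∞-algebra over a field k of characteristic 0 and P a homogeneous normalized Hochschild cochain of degree |P| in C^•(A). Then ∂_Hoch∘L_P − (−1)^{|P|−1}L_P∘∂_Hoch = L_{∂P}, where ∂P := b∘P − (−1)^{|P|−1}P∘b is the Hochschild cochain differential; in particular P ↦ L_P is a chain map from the normalized shifted Hochschild cochain complex C̄^•(A)[1] to the endomorphism complex End_k(C_•(A)). -/

import Mathlib

open Finsupp
open scoped Classical

namespace NC

variable (S : Type) [CommRing S] {κ : Type}

/-- The sign `(−1)^n` for `n : ℤ`. -/
noncomputable def sgn (n : ℤ) : S := if Even n then 1 else -1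

/-- Degree of a basis element of `A` (the unit `none` = `1_A` has degree `0`). -/
def dgO (dg : κ → ℤ) : Option κ → ℤ := fun x => x.elim 0 dg

/-- `A`: a graded vector space with homogeneous basis `Option κ` (`none` = the unit `1_A`,
`some x` of degree `dg x`). -/
abbrev Avs (κ : Type) (S : Type) [CommRing S] := Option κ →₀ S

/-- Hochschild chains `C_•(A) = A ⊗ B(Ā)`, with basis `a₀ ⊗ [a₁|…|aₙ]`
(`a₀` a basis element of `A`, the `aᵢ` basis elements of `Ā`). -/
abbrev Cch (κ : Type) (S : Type) [CommRing S] := (Option κ × List κ) →₀ S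

variable (dg : κ → ℤ)

/-- `ε` of a list of `A`-basis elements: `Σ (|a|−1)`. -/
def epsO : List (Option κ) → ℤ := fun ls => (ls.map fun x => dgO dg x - 1).sum

/-- `ε` of a list of `Ā`-basis elements: `εᵢ = Σ_{r≤i} (|a_r|−1)`. -/
def epsK : List κ → ℤ := fun ms => (ms.map fun x => dg x - 1).sum

/-- `μ_j = |a₀|−1+ε_j`. -/
def muK (a₀ : Option κ) (ms : List κ) (j : ℕ) : ℤ :=
  dgO dg a₀ - 1 + epsK dg (ms.take j)

/-- A (component family of a) Hochschild cochain is a function on basis words; `HasArity P p`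
says it is concentrated in arity `p`. -/
def HasArity (P : List (Option κ) → Avs κ S) (p : ℕ) : Prop :=
  ∀ ls, ls.length ≠ p → P ls = 0

/-- Normalized cochain: vanishes as soon as one entry is the unit `1_A`. -/
def IsNormalized (P : List (Option κ) → Avs κ S) : Prop :=
  ∀ ls, none ∈ ls → P ls = 0

/-- Homogeneous of degree `dP` in `C^•(A)`: `P[a₁|…|aₚ]` has degree `Σ(|aᵢ|−1) + dP`. -/
def IsHomog (P : List (Option κ) → Avs κ S) (dP : ℤ) : Prop :=
  ∀ ls x, x ∈ (P ls).support → dgO dg x = epsO dg ls + dP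

/-- Multilinear insertion of a general vector of `A` into a slot of a cochain. -/
noncomputable def insEval (P : List (Option κ) → Avs κ S) (pre : List (Option κ))
    (v : Avs κ S) (post : List (Option κ)) : Avs κ S :=
  v.sum fun x c => c • P (pre ++ x :: post)

/-- The Gerstenhaber insertion `P∘Q`, the inner cochain `Q` being of `C^•`-degree `dQ`:
`(P∘Q)[a₁|…|aₙ] = Σ (−1)^{(|Q|−1)ε_i} P[a₁|…|a_i|Q[a_{i+1}|…|a_{i+v}]|…|aₙ]`. -/
noncomputable def circC (P Q : List (Option κ) → Avs κ S) (dQ : ℤ) :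
    List (Option κ) → Avs κ S := fun ls =>
  ∑ i ∈ Finset.range (ls.length + 1), ∑ v ∈ Finset.range (ls.length + 1),
    if i + v ≤ ls.length then
      sgn S ((dQ - 1) * epsO dg (ls.take i)) •
        insEval S P (ls.take i) (Q ((ls.drop i).take v)) (ls.drop (i + v))
    else 0

/-- Gerstenhaber bracket `[P,Q] = P∘Q − (−1)^{(|P|−1)(|Q|−1)} Q∘P`. -/
noncomputable def gBr (P Q : List (Option κ) → Avs κ S) (dP dQ : ℤ) :
    List (Option κ) → Avs κ S := fun ls =>
  circC S dg P Q dQ ls - sgn S ((dP - 1) * (dQ - 1)) • circC S dg Q P dP ls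

/-- `v ⊗ [ms]` for a general vector `v` of `A` in the module slot of `C_•(A)`. -/
noncomputable def genA (v : Avs κ S) (ms : List κ) : Cch κ S :=
  v.sum fun x c => Finsupp.single (x, ms) c

/-- `a₀ ⊗ [pre | v̄ | post]` for a general vector `v` of `A` inserted in a bar slot (the class
of the unit `1_A` in `Ā = A/k·1_A` being zero). -/
noncomputable def genBar (a₀ : Option κ) (pre : List κ) (v : Avs κ S) (post : List κ) :
    Cch κ S :=
  v.sum fun x c => Option.elim x 0 fun y => Finsupp.single (a₀, pre ++ y :: post) c

/-- The value of the operator `L_P` on the generator `a₀ ⊗ [a₁|…|aₙ]`: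
`L_P(a₀⊗[a₁|…|aₙ]) = Σ (−1)^{(|P|−1)μ_j} a₀⊗[a₁|…|a_j|P[a_{j+1}|…|a_{j+l}]|…|aₙ]
 + Σ (−1)^{μ_i(μ_n−μ_i)} s⁻¹P([a_{i+1}|…|aₙ|a₀|…|a_j]) ⊗ [a_{j+1}|…|a_i]`
(the second sum over the cyclic terms in which `P` includes `a₀`). -/
noncomputable def Lgen (P : List (Option κ) → Avs κ S) (dP : ℤ)
    (a₀ : Option κ) (ms : List κ) : Cch κ S :=
  (∑ j ∈ Finset.range (ms.length + 1), ∑ l ∈ Finset.range (ms.length + 1),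
    if j + l ≤ ms.length then
      sgn S ((dP - 1) * muK dg a₀ ms j) •
        genBar S a₀ (ms.take j) (P (((ms.drop j).take l).map some)) (ms.drop (j + l))
    else 0)
  + ∑ i ∈ Finset.range (ms.length + 1), ∑ j ∈ Finset.range (ms.length + 1),
      if j ≤ i then
        sgn S (muK dg a₀ ms i * (muK dg a₀ ms ms.length - muK dg a₀ ms i)) •
          genA S (P ((ms.drop i).map some ++ a₀ :: (ms.take j).map some))
            ((ms.drop j).take (i - j))
      else 0

/-- The operator `L_P : C_•(A) → C_•(A)` associated to a cochain `P` of `C^•`-degree `dP`. -/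
noncomputable def Lop (P : List (Option κ) → Avs κ S) (dP : ℤ) : Cch κ S →ₗ[S] Cch κ S :=
  Finsupp.lift (Cch κ S) S (Option κ × List κ) fun g => Lgen S dg P dP g.1 g.2

/-- The Hochschild boundary `∂_Hoch` of the (curved) A∞-structure `b` (a degree `2` cochain):
it is given on generators by exactly the formula `L_b`. -/
noncomputable def hochOp (b : List (Option κ) → Avs κ S) : Cch κ S →ₗ[S] Cch κ S :=
  Lop S dg b 2

/-- `a ⊗ [ls]` where the bar entries are allowed to be unit basis elements (which die in
`Ā`). -/
noncomputable def genO (a : Option κ) (ls : List (Option κ)) : Cch κ S :=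
  if none ∈ ls then 0 else Finsupp.single (a, ls.reduceOption) 1

/-- Connes' operator `B` on generators:
`B(a₀⊗[a₁|…|aₙ]) = Σᵢ (−1)^{(ε_{i−1}+|a₀|−1)(ε_n−ε_{i−1})} 1_A⊗[a_i|…|aₙ|a₀|a₁|…|a_{i−1}]`. -/
noncomputable def Bgen (a₀ : Option κ) (ms : List κ) : Cch κ S :=
  ∑ i ∈ Finset.range (ms.length + 1),
    sgn S ((epsK dg (ms.take (i - 1)) + dgO dg a₀ - 1) *
        (epsK dg ms - epsK dg (ms.take (i - 1)))) •
      genO S none (((a₀ :: ms.map some).drop i) ++ ((a₀ :: ms.map some).take i))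

/-- Connes' operator `B : C_•(A) → C_•(A)`. -/
noncomputable def Bop : Cch κ S →ₗ[S] Cch κ S :=
  Finsupp.lift (Cch κ S) S (Option κ × List κ) fun g => Bgen S dg g.1 g.2

/-- A unital curved A∞-structure on `A` (components `b` of the degree `1` coderivation `b` of
`BA`, written with values in `A`): homogeneity, `b∘b = 0`, and the unit axioms. -/
structure IsUnitalCurvedAInf (b : List (Option κ) → Avs κ S) : Prop where
  homog : IsHomog S dg b 2
  sq : ∀ ls, circC S dg b b 2 ls = 0
  unit1 : b [none] = 0
  unitR : ∀ x : Option κ, b [x, none] = sgn S (dgO dg x) • Finsupp.single x 1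
  unitL : ∀ x : Option κ, b [none, x] = Finsupp.single x 1
  unitHi : ∀ ls, 3 ≤ ls.length → none ∈ ls → b ls = 0

/-- A unital A∞-structure: a unital curved A∞-structure with `b₀ = 0`. -/
structure IsUnitalAInf (b : List (Option κ) → Avs κ S) extends
    IsUnitalCurvedAInf S dg b : Prop where
  curv0 : b [] = 0

end NC

/-!
Rotating the word `a w` in all possible ways, with the letter `a` marked, sends a chain `a ⊗ w` to a
signed sum of words with exactly one marked letter. This intertwines `L_P` with the coderivation
`P̂`, where an output of `P` is marked as soon as one of its inputs is. Every function `F` of chains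
is the pullback of a function of marked words, namely of the extension of `F` by zero to words whose
first letter is not the marked one. Hence the commutator formula for coderivations of the tensor
coalgebra gives `[L_P, L_Q] = L_[P, Q]`; the theorem is the formula for `[L_b, L_P]`.

This is first seen for chains with `w` a word in `A`. It descends to words in `A / k·1_A` because
the operators preserve the span of the degenerate chains: for `L_b`, the two products of a unit with
its cyclic neighbours cancel.
-/

namespace NC

section SplitSum

variable {X Y M N : Type*} [AddCommMonoid M] [AddCommMonoid N]

/-- The sum of `f u v` over all factorizations `w = u ++ v` of a word in two factors. -/
def splitSum (f : List X → List X → M) (w : List X) : M :=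
  ∑ i ∈ Finset.range (w.length + 1), f (w.take i) (w.drop i)

/-- The sum of `f u v t` over all factorizations `w = u ++ v ++ t` of a word in three factors. -/
def splitSum₃ (f : List X → List X → List X → M) (w : List X) : M :=
  splitSum (fun u r => splitSum (fun v t => f u v t) r) w

lemma splitSum₃_mem {C : Type*} [SetLike C M] [AddSubmonoidClass C M] {s : C}
    {f : List X → List X → List X → M} {w : List X}
    (h : ∀ u v t, u ++ (v ++ t) = w → f u v t ∈ s) : splitSum₃ f w ∈ s := by
  simp only [splitSum₃, splitSum]
  refine sum_mem fun _ _ => sum_mem fun _ _ => h _ _ _ ?_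
  rw [List.take_append_drop, List.take_append_drop]

lemma splitSum_congr {f g : List X → List X → M} {w : List X}
    (h : ∀ u v, u ++ v = w → f u v = g u v) : splitSum f w = splitSum g w :=
  Finset.sum_congr rfl fun _ _ => h _ _ (List.take_append_drop _ _)

lemma splitSum₃_congr {f g : List X → List X → List X → M} {w : List X}
    (h : ∀ u v t, u ++ (v ++ t) = w → f u v t = g u v t) : splitSum₃ f w = splitSum₃ g w :=
  splitSum_congr fun _ _ hr => splitSum_congr fun _ _ ht => h _ _ _ (by rw [ht, hr])

lemma splitSum_eq_zero {f : List X → List X → M} {w : List X}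
    (h : ∀ u v, u ++ v = w → f u v = 0) : splitSum f w = 0 :=
  Finset.sum_eq_zero fun _ _ => h _ _ (List.take_append_drop _ _)

lemma splitSum₃_eq_zero {f : List X → List X → List X → M} {w : List X}
    (h : ∀ u v t, u ++ (v ++ t) = w → f u v t = 0) : splitSum₃ f w = 0 :=
  splitSum_eq_zero fun _ _ hr => splitSum_eq_zero fun _ _ ht => h _ _ _ (by rw [ht, hr])

lemma splitSum_add (f g : List X → List X → M) (w : List X) :
    splitSum (fun u v => f u v + g u v) w = splitSum f w + splitSum g w :=
  Finset.sum_add_distrib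

lemma splitSum₃_add (f g : List X → List X → List X → M) (w : List X) :
    splitSum₃ (fun u v t => f u v t + g u v t) w = splitSum₃ f w + splitSum₃ g w := by
  simp only [splitSum₃, splitSum_add]

lemma map_splitSum {F : Type*} [FunLike F M N] [AddMonoidHomClass F M N] (φ : F)
    (f : List X → List X → M) (w : List X) :
    φ (splitSum f w) = splitSum (fun u v => φ (f u v)) w :=
  map_sum φ _ _

lemma map_splitSum₃ {F : Type*} [FunLike F M N] [AddMonoidHomClass F M N] (φ : F)
    (f : List X → List X → List X → M) (w : List X) :
    φ (splitSum₃ f w) = splitSum₃ (fun u v t => φ (f u v t)) w := by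
  simp only [splitSum₃, map_splitSum]

lemma smul_splitSum {S : Type*} [DistribSMul S M] (c : S) (f : List X → List X → M) (w : List X) :
    c • splitSum f w = splitSum (fun u v => c • f u v) w :=
  Finset.smul_sum

lemma smul_splitSum₃ {S : Type*} [DistribSMul S M] (c : S) (f : List X → List X → List X → M)
    (w : List X) : c • splitSum₃ f w = splitSum₃ (fun u v t => c • f u v t) w := by
  simp only [splitSum₃, smul_splitSum]

lemma splitSum_map (g : Y → X) (f : List X → List X → M) (w : List Y) :
    splitSum f (w.map g) = splitSum (fun u v => f (u.map g) (v.map g)) w := by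
  simp [splitSum]

lemma splitSum₃_map (g : Y → X) (f : List X → List X → List X → M) (w : List Y) :
    splitSum₃ f (w.map g) = splitSum₃ (fun u v t => f (u.map g) (v.map g) (t.map g)) w := by
  simp only [splitSum₃, splitSum_map]

@[simp]
lemma splitSum_nil (f : List X → List X → M) : splitSum f [] = f [] [] := by
  simp [splitSum]

lemma splitSum_cons (f : List X → List X → M) (x : X) (w : List X) :
    splitSum f (x :: w) = f [] (x :: w) + splitSum (fun u v => f (x :: u) v) w := by
  rw [splitSum, List.length_cons, Finset.sum_range_succ', add_comm]
  rfl

lemma splitSum_append_cons (f : List X → List X → M) (u t : List X) (y : X) :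
    splitSum f (u ++ y :: t) = splitSum (fun u₁ u₂ => f u₁ (u₂ ++ y :: t)) u
      + splitSum (fun t₁ t₂ => f (u ++ y :: t₁) t₂) t := by
  induction u generalizing f with
  | nil => simp [splitSum_cons]
  | cons x u ih =>
    simp only [List.cons_append, splitSum_cons, ih (fun u v => f (x :: u) v), add_assoc]

lemma splitSum₃_append_cons (f : List X → List X → List X → M) (u t : List X) (y : X) :
    splitSum₃ f (u ++ y :: t) = splitSum₃ (fun u₁ u₂ u₃ => f u₁ u₂ (u₃ ++ y :: t)) u
      + splitSum (fun u₁ u₂ => splitSum (fun t₁ t₂ => f u₁ (u₂ ++ y :: t₁) t₂) t) u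
      + splitSum₃ (fun t₁ t₂ t₃ => f (u ++ y :: t₁) t₂ t₃) t := by
  simp only [splitSum₃, splitSum_append_cons, splitSum_add]

lemma splitSum_eq_first {f : List X → List X → M} (w : List X)
    (h : ∀ u v, u ≠ [] → f u v = 0) : splitSum f w = f [] w := by
  cases w with
  | nil => exact splitSum_nil f
  | cons x w =>
    rw [splitSum_cons, splitSum_eq_zero fun u v _ => h _ _ (List.cons_ne_nil x u), add_zero]

lemma splitSum_eq_last {f : List X → List X → M} (w : List X)
    (h : ∀ u v, v ≠ [] → f u v = 0) : splitSum f w = f w [] := by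
  rcases w.eq_nil_or_concat' with rfl | ⟨w, x, rfl⟩
  · exact splitSum_nil f
  · rw [splitSum_append_cons, splitSum_eq_zero fun u v _ => h _ _ (by simp), splitSum_nil, zero_add]

lemma splitSum_comm (f : List X → List X → List Y → List Y → M) (w : List X) (z : List Y) :
    splitSum (fun u v => splitSum (fun s t => f u v s t) z) w
      = splitSum (fun s t => splitSum (fun u v => f u v s t) w) z :=
  Finset.sum_comm

lemma splitSum_assoc (f : List X → List X → List X → M) (w : List X) :
    splitSum (fun r t => splitSum (fun u v => f u v t) r) w = splitSum₃ f w := by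
  unfold splitSum₃
  induction w generalizing f with
  | nil => simp
  | cons x w ih =>
    simp only [splitSum_cons, splitSum_nil, splitSum_add, ih fun u v t => f (x :: u) v t, add_assoc]

lemma splitSum₃_splitSum₃_right
    {f g : List X → List X → List X → List X → List X → List X → M} {w : List X}
    (h : ∀ a b c d e, f a b (c ++ (d ++ e)) c d e = g (a ++ (b ++ c)) d e a b c) :
    splitSum₃ (fun u v t => splitSum₃ (f u v t) t) w
      = splitSum₃ (fun u v t => splitSum₃ (g u v t) u) w := by
  let k a b c d e := f a b (c ++ (d ++ e)) c d e
  calc splitSum₃ (fun u v t => splitSum₃ (f u v t) t) w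
    _ = splitSum₃ (fun a b t => splitSum₃ (k a b) t) w :=
      splitSum₃_congr fun _ _ _ _ => splitSum₃_congr fun _ _ _ ht => by rw [← ht]
    _ = splitSum (fun u r => splitSum (fun a s => splitSum (fun b c =>
          splitSum (fun d e => k a b c d e) r) s) u) w := by
      simp only [splitSum₃, splitSum_assoc]
    _ = splitSum₃ (fun u d e => splitSum₃ (fun a b c => k a b c d e) u) w :=
      splitSum_congr fun u r _ =>
        (splitSum_congr fun a s _ => splitSum_comm _ _ _).trans (splitSum_comm _ _ _)
    _ = splitSum₃ (fun u v t => splitSum₃ (g u v t) u) w :=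
      splitSum₃_congr fun _ _ _ _ => splitSum₃_congr fun _ _ _ hu => by rw [← hu, ← h]

lemma splitSum₃_splitSum₃_middle
    {f : List X → List X → List X → List X → List X → List X → List X → M}
    {g : List X → List X → List X → List X → List X → List X → M} {w : List X}
    (h : ∀ a b c d e, f (a ++ b) c (d ++ e) a b d e = g a (b ++ (c ++ d)) e b c d) :
    splitSum₃ (fun u v t => splitSum (fun u₁ u₂ => splitSum (f u v t u₁ u₂) t) u) w
      = splitSum₃ (fun u v t => splitSum₃ (g u v t) v) w := by
  let k a b c d e := g a (b ++ (c ++ d)) e b c d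
  calc splitSum₃ (fun u v t => splitSum (fun u₁ u₂ => splitSum (f u v t u₁ u₂) t) u) w
    _ = splitSum₃ (fun u c t => splitSum (fun a b => splitSum (fun d e => k a b c d e) t) u) w :=
      splitSum₃_congr fun _ _ _ _ => splitSum_congr fun _ _ hu => splitSum_congr fun _ _ ht => by
        rw [← hu, ← ht, h]
    _ = splitSum (fun u r => splitSum (fun a b => splitSum (fun c t =>
          splitSum (fun d e => k a b c d e) t) r) u) w :=
      splitSum_congr fun _ _ _ => splitSum_comm _ _ _
    _ = splitSum₃ (fun a v e => splitSum₃ (fun b c d => k a b c d e) v) w := by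
      simp only [splitSum₃, splitSum_assoc]
    _ = splitSum₃ (fun u v t => splitSum₃ (g u v t) v) w :=
      splitSum₃_congr fun _ _ _ _ => splitSum₃_congr fun _ _ _ hv => by rw [← hv]

lemma splitSum_splitSum₃_left
    {f : List X → List X → List X → List X → List X → M}
    {g : List X → List X → List X → List X → List X → M} {w : List X}
    (h : ∀ a b c d, f a b (c ++ d) c d = g (a ++ (b ++ c)) d a b c) :
    splitSum₃ (fun u v t => splitSum (f u v t) t) w
      = splitSum (fun u v => splitSum₃ (g u v) u) w := by
  let k a b c d := f a b (c ++ d) c d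
  calc splitSum₃ (fun u v t => splitSum (f u v t) t) w
    _ = splitSum₃ (fun a b t => splitSum (fun c d => k a b c d) t) w :=
      splitSum₃_congr fun _ _ _ _ => splitSum_congr fun _ _ ht => by rw [← ht]
    _ = splitSum (fun u d => splitSum₃ (fun a b c => k a b c d) u) w := by
      simp only [splitSum₃, splitSum_assoc]
    _ = splitSum (fun u v => splitSum₃ (g u v) u) w :=
      splitSum_congr fun _ _ _ => splitSum₃_congr fun _ _ _ hu => by rw [← hu, ← h]

lemma splitSum_splitSum₃_right
    {f : List X → List X → List X → List X → List X → M}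
    {g : List X → List X → List X → List X → List X → M} {w : List X}
    (h : ∀ a b c d, f (a ++ b) c d a b = g a (b ++ (c ++ d)) b c d) :
    splitSum₃ (fun u v t => splitSum (f u v t) u) w
      = splitSum (fun u v => splitSum₃ (g u v) v) w := by
  let k a b c d := g a (b ++ (c ++ d)) b c d
  calc splitSum₃ (fun u v t => splitSum (f u v t) u) w
    _ = splitSum₃ (fun u c d => splitSum (fun a b => k a b c d) u) w :=
      splitSum₃_congr fun _ _ _ _ => splitSum_congr fun _ _ hu => by rw [← hu, h]
    _ = splitSum (fun u r => splitSum (fun a b => splitSum (fun c d => k a b c d) r) u) w :=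
      splitSum_congr fun _ _ _ => splitSum_comm _ _ _
    _ = splitSum (fun a v => splitSum₃ (fun b c d => k a b c d) v) w := by
      simp only [splitSum₃, splitSum_assoc]
    _ = splitSum (fun u v => splitSum₃ (g u v) v) w :=
      splitSum_congr fun _ _ _ => splitSum₃_congr fun _ _ _ hv => by rw [← hv]

lemma splitSum_splitSum_both
    {f : List X → List X → List X → List X → List X → M}
    {g : List X → List X → List X → List X → List X → List X → M} {w : List X}
    (h : ∀ a b c d, f a (b ++ c) d b c = g (a ++ b) (c ++ d) c d a b) :
    splitSum₃ (fun u v t => splitSum (f u v t) v) w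
      = splitSum (fun u v => splitSum (fun v₁ v₂ => splitSum (g u v v₁ v₂) u) v) w := by
  let k a b c d := f a (b ++ c) d b c
  calc splitSum₃ (fun u v t => splitSum (f u v t) v) w
    _ = splitSum₃ (fun a v d => splitSum (fun b c => k a b c d) v) w :=
      splitSum₃_congr fun _ _ _ _ => splitSum_congr fun _ _ hv => by rw [← hv]
    _ = splitSum (fun u v => splitSum (fun a b => splitSum (fun c d => k a b c d) v) u) w := by
      simp only [splitSum₃, splitSum_assoc]
    _ = splitSum (fun u v => splitSum (fun v₁ v₂ => splitSum (g u v v₁ v₂) u) v) w :=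
      splitSum_congr fun _ _ _ => (splitSum_comm _ _ _).trans <|
        splitSum_congr fun _ _ hv => splitSum_congr fun _ _ hu => by rw [← hu, ← hv, ← h]

lemma sum_range_eq_splitSum₃_of_add_le (f : List X → List X → List X → M) (w : List X) :
    (∑ i ∈ Finset.range (w.length + 1), ∑ l ∈ Finset.range (w.length + 1),
      if i + l ≤ w.length then f (w.take i) ((w.drop i).take l) (w.drop (i + l)) else 0)
      = splitSum₃ f w := by
  refine Finset.sum_congr rfl fun i hi => ?_
  rw [← Finset.sum_filter]
  simp only [splitSum, List.drop_drop]
  congr 1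
  ext l
  simp only [Finset.mem_filter, Finset.mem_range, List.length_drop] at hi ⊢
  omega

lemma sum_range_eq_splitSum₃_of_le (f : List X → List X → List X → M) (w : List X) :
    (∑ i ∈ Finset.range (w.length + 1), ∑ j ∈ Finset.range (w.length + 1),
      if j ≤ i then f (w.take j) ((w.drop j).take (i - j)) (w.drop i) else 0)
      = splitSum₃ f w := by
  rw [← splitSum_assoc]
  refine Finset.sum_congr rfl fun i hi => ?_
  rw [← Finset.sum_filter]
  refine Finset.sum_congr ?_ fun j hj => ?_
  · ext j
    simp only [Finset.mem_filter, Finset.mem_range, List.length_take] at hi ⊢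
    omega
  · have hji : j ≤ i := by
      rw [Finset.mem_range, List.length_take] at hj
      omega
    rw [List.take_take, min_eq_left hji, List.drop_take]

end SplitSum

section Signs

variable {S : Type} [CommRing S]

lemma sgn_add (m n : ℤ) : sgn S (m + n) = sgn S m * sgn S n := by
  by_cases hm : Even m <;> by_cases hn : Even n <;> simp [sgn, Int.even_add, hm, hn]

lemma sgn_congr {m n : ℤ} (h : (m : ZMod 2) = n) : sgn S m = sgn S n := by
  simp only [sgn, ← ZMod.intCast_eq_zero_iff_even, h]

lemma sgn_mul_self (n : ℤ) : sgn S n * sgn S n = 1 := by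
  rw [← sgn_add]
  exact if_pos ⟨n, rfl⟩

lemma sgn_add_one (n : ℤ) : sgn S (n + 1) = -sgn S n := by
  rw [sgn_add, show sgn S 1 = -1 from if_neg (by decide), mul_neg_one]

end Signs

section LinearCombination

variable {R X Y M : Type*} [CommSemiring R] [AddCommMonoid M] [Module R M]

lemma linearCombination_add_left (f g : X → M) (v : X →₀ R) :
    linearCombination R (fun x => f x + g x) v
      = linearCombination R f v + linearCombination R g v := by
  simp only [linearCombination_apply, smul_add, sum_add]

lemma linearCombination_smul_left (c : R) (f : X → M) (v : X →₀ R) :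
    linearCombination R (fun x => c • f x) v = c • linearCombination R f v := by
  simp only [linearCombination_apply, smul_sum, smul_comm c]

lemma linearCombination_comm (f : X → Y → M) (v : X →₀ R) (z : Y →₀ R) :
    linearCombination R (fun x => linearCombination R (fun y => f x y) z) v
      = linearCombination R (fun y => linearCombination R (fun x => f x y) v) z := by
  simp only [linearCombination_apply, smul_sum]
  rw [sum_comm]
  exact sum_congr fun y _ => sum_congr fun x _ => smul_comm _ _ _

lemma linearCombination_splitSum (f : X → List Y → List Y → M) (v : X →₀ R) (w : List Y) :
    linearCombination R (fun x => splitSum (f x) w) v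
      = splitSum (fun s t => linearCombination R (fun x => f x s t) v) w := by
  simp only [linearCombination_apply, Finsupp.sum, splitSum, Finset.smul_sum]
  exact Finset.sum_comm

lemma linearCombination_splitSum₃ (f : X → List Y → List Y → List Y → M) (v : X →₀ R)
    (w : List Y) :
    linearCombination R (fun x => splitSum₃ (f x) w) v
      = splitSum₃ (fun r s t => linearCombination R (fun x => f x r s t) v) w := by
  simp only [splitSum₃, linearCombination_splitSum]

lemma linearCombination_congr {f g : X → M} {s : Set X} {v : X →₀ R}
    (hv : v ∈ supported R R s) (h : ∀ x ∈ s, f x = g x) :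
    linearCombination R f v = linearCombination R g v := by
  simp only [linearCombination_apply]
  exact sum_congr fun x hx => by rw [h x (hv hx)]

lemma linearCombination_mem {f : X → M} {s : Set X} {v : X →₀ R} {p : Submodule R M}
    (hv : v ∈ supported R R s) (h : ∀ x ∈ s, f x ∈ p) : linearCombination R f v ∈ p :=
  p.sum_mem fun x hx => p.smul_mem _ (h x (hv hx))

end LinearCombination

section CoderPullback

variable {S : Type} [CommRing S] {X M : Type*} [AddCommGroup M] [Module S M]

lemma sgn_smul_linearCombination_sgn_smul {s : Set X} {v : X →₀ S} {d : X → ℤ} {k l : ℤ}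
    {f : X → M} (hv : v ∈ supported S S s) (h : ∀ x ∈ s, ((k + d x : ℤ) : ZMod 2) = l) :
    sgn S k • linearCombination S (fun x => sgn S (d x) • f x) v
      = sgn S l • linearCombination S f v := by
  simp only [← linearCombination_smul_left, smul_smul, ← sgn_add]
  exact linearCombination_congr hv fun x hx => by rw [sgn_congr (h x hx)]

/-- The degree `Σ |x|` of a word, for letters of degree `deg`. Here and below the letters are
generators of the suspension `A[1]`, and all degrees are the shifted ones. -/
def wordDeg (deg : X → ℤ) (w : List X) : ℤ := (w.map deg).sum

lemma wordDeg_map {Y : Type*} (deg : X → ℤ) (g : Y → X) (w : List Y) :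
    wordDeg deg (w.map g) = wordDeg (deg ∘ g) w := by
  simp [wordDeg]

variable {deg : X → ℤ}

@[simp]
lemma wordDeg_nil : wordDeg deg [] = 0 := by
  simp [wordDeg]

@[simp]
lemma wordDeg_cons (x : X) (w : List X) : wordDeg deg (x :: w) = deg x + wordDeg deg w := by
  simp [wordDeg]

@[simp]
lemma wordDeg_append (u v : List X) : wordDeg deg (u ++ v) = wordDeg deg u + wordDeg deg v := by
  simp [wordDeg]

variable (deg)

/-- Homogeneity of a cochain, given by its values on words, of shifted degree `p`. -/
def IsHomogCochain (p : ℤ) (P : List X → X →₀ S) : Prop :=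
  ∀ w, P w ∈ supported S S {x | deg x = wordDeg deg w + p}

/-- The composite `G ∘ P̂` of a function `G` of words, extended linearly, with the coderivation `P̂`
whose components are those of the cochain `P` of shifted degree `p`. For a cochain `G` this is the
Gerstenhaber insertion `G ∘ P`. -/
noncomputable def coderPullback (p : ℤ) (P : List X → X →₀ S) (G : List X → M) : List X → M :=
  splitSum₃ fun u v t =>
    sgn S (p * wordDeg deg u) • linearCombination S (fun x => G (u ++ x :: t)) (P v)

/-- The part of `G ∘ P̂ ∘ Q̂` in which `P` is inserted to the left of `Q`. -/
noncomputable def disjointPullback (p q : ℤ) (P Q : List X → X →₀ S) (G : List X → M) :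
    List X → M :=
  splitSum₃ fun u v t => splitSum₃ (fun a b c =>
    sgn S (q * wordDeg deg u + p * wordDeg deg a) • linearCombination S (fun y =>
      linearCombination S (fun x => G (a ++ x :: (c ++ y :: t))) (P b)) (Q v)) u

variable {deg} {p q : ℤ} {P Q : List X → X →₀ S}

lemma coderPullback_coderPullback (hQ : IsHomogCochain deg q Q) (G : List X → M) :
    coderPullback deg q Q (coderPullback deg p P G)
      = disjointPullback deg p q P Q G
        + coderPullback deg (p + q) (coderPullback deg q Q P) G
        + sgn S (p * q) • disjointPullback deg q p Q P G := by
  funext w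
  simp only [Pi.add_apply, Pi.smul_apply]
  unfold coderPullback disjointPullback
  simp only [splitSum₃_append_cons, linearCombination_add_left, smul_add, splitSum₃_add,
    linearCombination_splitSum₃, linearCombination_splitSum, smul_splitSum₃, smul_splitSum,
    map_splitSum₃, linearCombination_smul_left, map_smul, smul_smul]
  congr 1
  · congr 1
    · simp only [sgn_add]
    · refine splitSum₃_splitSum₃_middle fun a b c d e => ?_
      rw [apply_linearCombination]
      simp only [Function.comp_def, ← sgn_add]
      congr 1
      refine sgn_congr ?_
      simp only [wordDeg_append]
      push_cast
      grind
  · refine splitSum₃_splitSum₃_right fun a b c d e => ?_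
    rw [linearCombination_comm _ (P d)]
    simp only [← sgn_add, List.append_assoc, List.cons_append]
    refine sgn_smul_linearCombination_sgn_smul (hQ b) fun y (hy : deg y = _) => ?_
    simp only [wordDeg_append, wordDeg_cons, hy]
    push_cast
    grind

lemma IsHomogCochain.sub_smul (hP : IsHomogCochain deg p P) (c : S)
    (hQ : IsHomogCochain deg p Q) : IsHomogCochain deg p (P - c • Q) :=
  fun w => Submodule.sub_mem _ (hP w) (Submodule.smul_mem _ c (hQ w))

lemma coderPullback_sub_smul (c : S) (P Q : List X → X →₀ S) (G : List X → M) :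
    coderPullback deg p (P - c • Q) G = coderPullback deg p P G - c • coderPullback deg p Q G := by
  funext w
  simp only [coderPullback, sub_eq_add_neg, Pi.add_apply, Pi.neg_apply, Pi.smul_apply,
    ← neg_smul, map_add, map_smul, smul_add, splitSum₃_add, smul_splitSum₃, smul_comm (sgn S _)]

lemma coderPullback_commutator (hP : IsHomogCochain deg p P) (hQ : IsHomogCochain deg q Q)
    (G : List X → M) :
    coderPullback deg q Q (coderPullback deg p P G)
        - sgn S (p * q) • coderPullback deg p P (coderPullback deg q Q G)
      = coderPullback deg (p + q)
          (coderPullback deg q Q P - sgn S (p * q) • coderPullback deg p P Q) G := by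
  rw [coderPullback_coderPullback hQ, coderPullback_coderPullback hP, coderPullback_sub_smul,
    mul_comm q p, add_comm q p]
  simp only [smul_add, smul_smul, sgn_mul_self, one_smul]
  abel

lemma isHomogCochain_coderPullback (hP : IsHomogCochain deg p P) (hQ : IsHomogCochain deg q Q) :
    IsHomogCochain deg (p + q) (coderPullback deg q Q P) := by
  refine fun w => splitSum₃_mem fun u v t hw => Submodule.smul_mem _ _ ?_
  refine linearCombination_mem (hQ v) fun y (hy : deg y = _) => ?_
  convert hP (u ++ y :: t) using 3
  simp only [← hw, wordDeg_append, wordDeg_cons, hy]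
  ring_nf

end CoderPullback

section CyclicSum

variable {S : Type} [CommRing S] {X M : Type*} [AddCommGroup M] [Module S M]

/-- The extension of a cochain to words with marked letters: the output is marked exactly when one
of the inputs is. -/
noncomputable def markCochain (P : List X → X →₀ S) (w : List (X × Bool)) : X × Bool →₀ S :=
  (P (w.map Prod.fst)).mapDomain (·, w.any Prod.snd)

/-- The function `F`, supported on words whose first letter is the marked one. -/
def extendMarked (F : X → List X → M) : List (X × Bool) → M
  | (a, true) :: w => F a (w.map Prod.fst)
  | _ => 0

/-- The pullback of a function `G` of marked words along the cyclic sum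
`a ⊗ w ↦ Σ ± v ⊗ a ⊗ u` over `w = u ++ v`, with `a` marked. -/
noncomputable def cycPullback (deg : X → ℤ) (G : List (X × Bool) → M) (a : X) (w : List X) : M :=
  splitSum (fun u v => sgn S ((deg a + wordDeg deg u) * wordDeg deg v) •
    G (v.map (·, false) ++ (a, true) :: u.map (·, false))) w

/-- The composite `F ∘ L_P` of a function `F` of Hochschild chains `a ⊗ w`, extended linearly, with
the operator `L_P` of a cochain of shifted degree `p`. -/
noncomputable def liePullback (deg : X → ℤ) (p : ℤ) (P : List X → X →₀ S) (F : X → List X → M)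
    (a : X) (w : List X) : M :=
  splitSum₃ (fun u v t => sgn S (p * (deg a + wordDeg deg u)) •
      linearCombination S (fun x => F a (u ++ x :: t)) (P v)) w
    + splitSum₃ (fun u m v => sgn S ((deg a + wordDeg deg u + wordDeg deg m) * wordDeg deg v) •
      linearCombination S (fun x => F x m) (P (v ++ a :: u))) w

lemma map_liePullback {N : Type*} [AddCommGroup N] [Module S N] (φ : M →ₗ[S] N) (deg : X → ℤ)
    (p : ℤ) (P : List X → X →₀ S) (F : X → List X → M) (a : X) (w : List X) :
    φ (liePullback deg p P F a w) = liePullback deg p P (fun x u => φ (F x u)) a w := by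
  simp only [liePullback, map_add, map_splitSum₃, map_smul, apply_linearCombination,
    Function.comp_def]

lemma markCochain_map_false (P : List X → X →₀ S) (w : List X) :
    markCochain P (w.map (·, false)) = (P w).mapDomain (·, false) := by
  simp [markCochain, Function.comp_def, show (w.any fun _ => false) = false by simp]

lemma markCochain_append_true (P : List X → X →₀ S) (a : X) (u v : List X) :
    markCochain P (v.map (·, false) ++ (a, true) :: u.map (·, false))
      = (P (v ++ a :: u)).mapDomain (·, true) := by
  simp [markCochain, Function.comp_def]

lemma markCochain_sub_smul (c : S) (P Q : List X → X →₀ S) :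
    markCochain (P - c • Q) = markCochain P - c • markCochain Q := by
  funext w
  simp [markCochain, sub_eq_add_neg, ← neg_smul, mapDomain_add, mapDomain_smul]

lemma isHomogCochain_markCochain {deg : X → ℤ} {p : ℤ} {P : List X → X →₀ S}
    (hP : IsHomogCochain deg p P) : IsHomogCochain (deg ∘ Prod.fst) p (markCochain P) := by
  intro w y hy
  obtain ⟨x, hx, rfl⟩ := Finset.mem_image.1 (mapDomain_support hy)
  simpa [wordDeg_map] using hP _ hx

lemma coderPullback_markCochain (deg : X → ℤ) (q : ℤ) (P Q : List X → X →₀ S) :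
    coderPullback (deg ∘ Prod.fst) q (markCochain Q) (markCochain P)
      = markCochain (coderPullback deg q Q P) := by
  funext w
  rw [markCochain, ← lmapDomain_apply S S, coderPullback, coderPullback, map_splitSum₃,
    splitSum₃_map]
  refine splitSum₃_congr fun u v t hw => ?_
  rw [map_smul, apply_linearCombination, markCochain, linearCombination_mapDomain, wordDeg_map]
  simp [Function.comp_def, markCochain, ← hw, lmapDomain_apply]

lemma cycPullback_extendMarked (deg : X → ℤ) (F : X → List X → M) :
    cycPullback (S := S) deg (extendMarked F) = F := by
  funext a w
  refine (splitSum_eq_last w fun u v hv => ?_).trans ?_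
  · obtain ⟨x, v, rfl⟩ := List.exists_cons_of_ne_nil hv
    exact smul_zero _
  · simp [extendMarked, sgn, Function.comp_def]

lemma cycPullback_sub_smul (deg : X → ℤ) (c : S) (G H : List (X × Bool) → M) :
    cycPullback (S := S) deg (G - c • H)
      = cycPullback (S := S) deg G - c • cycPullback (S := S) deg H := by
  funext a w
  simp only [cycPullback, sub_eq_add_neg, Pi.add_apply, Pi.smul_apply, ← neg_smul,
    smul_add, splitSum_add, smul_splitSum, smul_comm (sgn S _)]

/-- The terms on the right in which `P` does not absorb the marked letter come from the first sum
of `L_P`, those in which it does come from the second. -/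
lemma liePullback_cycPullback {deg : X → ℤ} {p : ℤ} {P : List X → X →₀ S}
    (hP : IsHomogCochain deg p P) (G : List (X × Bool) → M) :
    liePullback deg p P (cycPullback (S := S) deg G)
      = cycPullback (S := S) deg (coderPullback (deg ∘ Prod.fst) p (markCochain P) G) := by
  funext a w
  unfold liePullback cycPullback coderPullback
  simp only [splitSum₃_append_cons, splitSum_append_cons, splitSum₃_map, splitSum_map, splitSum_add,
    splitSum₃_add, linearCombination_add_left, linearCombination_splitSum, smul_add, smul_splitSum,
    smul_splitSum₃, markCochain_map_false, markCochain_append_true, linearCombination_mapDomain]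
  simp only [Function.comp_def, wordDeg_append, wordDeg_cons, wordDeg_map, List.map_append,
    List.map_cons, List.append_assoc, List.cons_append, smul_smul, ← sgn_add]
  rw [add_right_comm]
  congr 1
  · congr 1
    · refine splitSum_splitSum₃_right fun u₁ u₂ v t => ?_
      refine sgn_smul_linearCombination_sgn_smul (hP v) fun x (hx : deg x = _) => ?_
      simp only [wordDeg_append, hx]
      push_cast
      grind
    · refine splitSum_splitSum_both fun u₁ u₂ v t => ?_
      refine sgn_smul_linearCombination_sgn_smul (hP (t ++ a :: u₁)) fun x (hx : deg x = _) => ?_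
      simp only [wordDeg_append, wordDeg_cons, hx]
      push_cast
      grind
  · refine splitSum_splitSum₃_left fun u v t₁ t₂ => ?_
    refine sgn_smul_linearCombination_sgn_smul (hP v) fun x (hx : deg x = _) => ?_
    simp only [wordDeg_append, hx]
    push_cast
    grind

lemma liePullback_commutator {deg : X → ℤ} {p q : ℤ} {P Q : List X → X →₀ S}
    (hP : IsHomogCochain deg p P) (hQ : IsHomogCochain deg q Q) (F : X → List X → M) :
    liePullback deg q Q (liePullback deg p P F)
        - sgn S (p * q) • liePullback deg p P (liePullback deg q Q F)
      = liePullback deg (p + q)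
          (coderPullback deg q Q P - sgn S (p * q) • coderPullback deg p P Q) F := by
  have hPQ := isHomogCochain_coderPullback hP hQ
  have hQP := isHomogCochain_coderPullback hQ hP
  rw [← cycPullback_extendMarked (S := S) deg F, liePullback_cycPullback hP,
    liePullback_cycPullback hQ, liePullback_cycPullback hQ, liePullback_cycPullback hP,
    ← cycPullback_sub_smul,
    coderPullback_commutator (isHomogCochain_markCochain hP) (isHomogCochain_markCochain hQ),
    coderPullback_markCochain, coderPullback_markCochain, ← markCochain_sub_smul,
    liePullback_cycPullback (hPQ.sub_smul _ (add_comm p q ▸ hQP))]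

end CyclicSum

section Unital

variable {S : Type} [CommRing S] {X M : Type*} [AddCommGroup M] [Module S M]

/-- The unit axioms of an A∞-structure `b`, for a letter `e` representing `s1_A`. -/
structure IsStrictlyUnital (deg : X → ℤ) (e : X) (b : List X → X →₀ S) : Prop where
  deg_unit : deg e = -1
  unit : b [e] = 0
  mul_unit : ∀ x, b [x, e] = sgn S (deg x + 1) • single x 1
  unit_mul : ∀ x, b [e, x] = single x 1
  higher : ∀ w, 3 ≤ w.length → e ∈ w → b w = 0

/-- The function `F` of chains `a ⊗ w` descends to reduced chains, i.e. those with `w` a word in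
`A / k·1_A`, where `e` represents the unit. -/
def IsReduced (e : X) (F : X → List X → M) : Prop := ∀ a w, e ∈ w → F a w = 0

variable {deg : X → ℤ} {e : X}

namespace IsStrictlyUnital

variable {b : List X → X →₀ S}

lemma markCochain (hb : IsStrictlyUnital deg e b) :
    IsStrictlyUnital (deg ∘ Prod.fst) (e, false) (markCochain b) where
  deg_unit := hb.deg_unit
  unit := by simp [NC.markCochain, hb.unit]
  mul_unit x := by simp [NC.markCochain, hb.mul_unit, mapDomain_single]
  unit_mul x := by simp [NC.markCochain, hb.unit_mul, mapDomain_single]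
  higher w hw he := by
    rw [NC.markCochain, hb.higher _ (by simpa using hw) (List.mem_map_of_mem he), mapDomain_zero]

lemma splitSum_mul_unit (hb : IsStrictlyUnital deg e b) (G : List X → M) (u v : List X) :
    splitSum (fun u₁ u₂ => sgn S (wordDeg deg u₁) •
        linearCombination S (fun x => G (u₁ ++ x :: v)) (b (u₂ ++ [e]))) u
      = if u = [] then 0 else -sgn S (wordDeg deg u) • G (u ++ v) := by
  rcases u.eq_nil_or_concat' with rfl | ⟨u, y, rfl⟩
  · simp [hb.unit]
  rw [splitSum_append_cons, splitSum_nil, splitSum_eq_last]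
  · simp [hb.unit, hb.mul_unit, ← sgn_add, smul_smul, sgn_add_one]
  · intro s t ht
    have := List.length_pos_iff.2 ht
    rw [hb.higher _ (by simp; omega) (by simp), map_zero, smul_zero]

lemma splitSum_unit_mul (hb : IsStrictlyUnital deg e b) (G : List X → M) (u v : List X) (y : X) :
    splitSum (fun u₁ u₂ => splitSum (fun v₁ v₂ => sgn S (wordDeg deg u₁) •
        linearCombination S (fun x => G (u₁ ++ x :: v₂)) (b (u₂ ++ e :: y :: v₁))) v) u
      = sgn S (wordDeg deg u) • G (u ++ y :: v) := by
  rw [splitSum_eq_last, splitSum_eq_first]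
  · simp [hb.unit_mul]
  · intro s t hs
    have := List.length_pos_iff.2 hs
    rw [hb.higher _ (by simp; omega) (by simp), map_zero, smul_zero]
  · intro s t ht
    have := List.length_pos_iff.2 ht
    refine splitSum_eq_zero fun _ _ _ => ?_
    rw [hb.higher _ (by simp; omega) (by simp), map_zero, smul_zero]

lemma coderPullback_append_unit_cons (hb : IsStrictlyUnital deg e b) {G : List X → M}
    (hG : ∀ w, e ∈ w → G w = 0) (u v : List X) :
    coderPullback deg 1 b G (u ++ e :: v)
      = (if v = [] then 0 else sgn S (wordDeg deg u) • G (u ++ v))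
        - if u = [] then 0 else sgn S (wordDeg deg u) • G (u ++ v) := by
  have vanish (u₁ v₁ t : List X) (h : e ∈ u₁ ∨ e ∈ t) :
      linearCombination S (fun x => G (u₁ ++ x :: t)) (b v₁) = 0 := by
    rw [linearCombination_apply, Finsupp.sum, Finset.sum_eq_zero]
    intro x _
    rw [hG _ (by simp; tauto), smul_zero]
  have mul_unit := hb.splitSum_mul_unit G u v
  rw [coderPullback, splitSum₃_append_cons, splitSum₃_eq_zero, splitSum₃_eq_zero]
  · simp only [one_mul, zero_add, add_zero]
    cases v with
    | nil =>
      rw [splitSum_congr fun _ _ _ => splitSum_nil _, mul_unit]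
      by_cases hu : u = [] <;> simp [hu]
    | cons y v =>
      simp only [splitSum_cons, splitSum_add, mul_unit, hb.splitSum_unit_mul]
      by_cases hu : u = [] <;> simp [hu, sub_eq_neg_add]
  all_goals
    intros
    rw [vanish _ _ _ (by simp), smul_zero]

/-- Only the two cyclic words in which the unit is the first or the last letter contribute, and
their contributions cancel. -/
lemma isReduced_cycPullback_coderPullback (hb : IsStrictlyUnital deg e b) {G : List (X × Bool) → M}
    (hG : ∀ w, (e, false) ∈ w → G w = 0) :
    IsReduced e (cycPullback (S := S) deg
      (coderPullback (deg ∘ Prod.fst) 1 (NC.markCochain b) G)) := by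
  intro a w hw
  obtain ⟨s, t, rfl⟩ := List.append_of_mem hw
  have unit_insert := hb.markCochain.coderPullback_append_unit_cons hG
  have unit_inner (u v : List (X × Bool)) (y : X × Bool) := unit_insert (u ++ y :: v)
  simp only [List.append_assoc, List.cons_append] at unit_inner
  rw [cycPullback, splitSum_append_cons, splitSum_eq_last, splitSum_eq_first]
  · let z := t.map (·, false) ++ (a, true) :: s.map (·, false)
    have unit_first : coderPullback (deg ∘ Prod.fst) 1 (NC.markCochain b) G ((e, false) :: z) =
        G z := by
      simpa [z, sgn] using unit_insert [] z
    have unit_last : coderPullback (deg ∘ Prod.fst) 1 (NC.markCochain b) G (z ++ [(e, false)]) =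
        -(sgn S (wordDeg deg t + (deg a + wordDeg deg s)) • G z) := by
      simpa [z, wordDeg_map, Function.comp_def] using unit_insert z []
    calc _
      _ = sgn S ((deg a + wordDeg deg s) * (deg e + wordDeg deg t)) • G z
          - sgn S ((deg a + (wordDeg deg s + deg e)) * wordDeg deg t
              + (wordDeg deg t + (deg a + wordDeg deg s))) • G z := by
        rw [sgn_add (_ * _) (_ + _), mul_smul, sub_eq_add_neg, ← smul_neg, ← unit_last,
          ← unit_first]
        simp [z]
      _ = 0 := by
        rw [sub_eq_zero, sgn_congr]
        simp only [hb.deg_unit]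
        push_cast
        grind
  · intro t₁ t₂ ht
    simp [unit_inner, ht]
  · intro s₁ s₂ hs
    simp [unit_insert, hs]

lemma isReduced_liePullback (hb : IsStrictlyUnital deg e b) (hbh : IsHomogCochain deg 1 b)
    {F : X → List X → M} (hF : IsReduced e F) : IsReduced e (liePullback deg 1 b F) := by
  rw [← cycPullback_extendMarked (S := S) deg F, liePullback_cycPullback hbh]
  refine hb.isReduced_cycPullback_coderPullback fun w hw => ?_
  match w, hw with
  | (x, true) :: w, hw => exact hF _ _ (List.mem_map_of_mem (f := Prod.fst) (by simpa using hw))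
  | (x, false) :: w, _ => rfl

end IsStrictlyUnital

lemma isReduced_liePullback {p : ℤ} {P : List X → X →₀ S} (hP : ∀ w, e ∈ w → P w = 0)
    {F : X → List X → M} (hF : IsReduced e F) : IsReduced e (liePullback deg p P F) := by
  intro a w hw
  have vanish (f : X → M) (v : List X) (h : (∀ x, f x = 0) ∨ e ∈ v) :
      linearCombination S f (P v) = 0 := by
    rcases h with h | h
    · simp [linearCombination_apply, h]
    · rw [hP v h, map_zero]
  rw [liePullback, splitSum₃_eq_zero, splitSum₃_eq_zero, zero_add]
  all_goals
    rintro u v t rfl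
    rw [vanish, smul_zero]
    simp only [List.mem_append] at hw
  · by_cases h : e ∈ v
    · exact .inl fun x => hF _ _ h
    · exact .inr (by simp; tauto)
  · by_cases h : e ∈ v
    · exact .inr h
    · exact .inl fun x => hF _ _ (by simp; tauto)

end Unital

section HochschildChains

variable {S : Type} [CommRing S] {κ : Type}

/-- The degree of a basis element of `A`, shifted to `A[1]`. -/
def shiftDeg (dg : κ → ℤ) (x : Option κ) : ℤ := dgO dg x - 1

variable {dg : κ → ℤ}

lemma IsHomog.isHomogCochain {P : List (Option κ) → Avs κ S} {dP : ℤ}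
    (hP : IsHomog S dg P dP) : IsHomogCochain (shiftDeg dg) (dP - 1) P := by
  intro w x hx
  have : dgO dg x = wordDeg (shiftDeg dg) w + dP := hP w x hx
  simp only [Set.mem_ofPred_eq, shiftDeg, this]
  ring

lemma IsUnitalCurvedAInf.isStrictlyUnital {b : List (Option κ) → Avs κ S}
    (hb : IsUnitalCurvedAInf S dg b) : IsStrictlyUnital (shiftDeg dg) none b where
  deg_unit := rfl
  unit := hb.unit1
  mul_unit x := by rw [hb.unitR, shiftDeg, sub_add_cancel]
  unit_mul := hb.unitL
  higher := hb.unitHi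

variable (dg) in
lemma circC_eq_coderPullback (P Q : List (Option κ) → Avs κ S) (dQ : ℤ) :
    circC S dg P Q dQ = coderPullback (shiftDeg dg) (dQ - 1) Q P :=
  funext fun w => by
    rw [coderPullback, ← sum_range_eq_splitSum₃_of_add_le]
    rfl

lemma genO_map_some (a : Option κ) (ms : List κ) : genO S a (ms.map some) = single (a, ms) 1 := by
  simp [genO, List.reduceOption]

lemma isReduced_genO : IsReduced (none : Option κ) (genO S) := fun _ _ h => if_pos h

lemma genBar_eq_linearCombination (a : Option κ) (pre : List κ) (v : Avs κ S) (post : List κ) :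
    genBar S a pre v post
      = linearCombination S (fun x => genO S a (pre.map some ++ x :: post.map some)) v := by
  rw [linearCombination_apply]
  refine sum_congr fun x _ => ?_
  cases x with
  | none => rw [isReduced_genO _ _ (by simp), smul_zero, Option.elim]
  | some y => rw [← List.map_cons, ← List.map_append, genO_map_some, smul_single_one, Option.elim]

lemma genA_eq_linearCombination (v : Avs κ S) (ms : List κ) :
    genA S v ms = linearCombination S (fun x => genO S x (ms.map some)) v := by
  rw [linearCombination_apply]
  exact sum_congr fun x _ => by rw [genO_map_some, smul_single_one]

lemma wordDeg_shiftDeg_map_some (ms : List κ) :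
    wordDeg (shiftDeg dg) (ms.map some) = epsK dg ms := by
  rw [wordDeg_map]
  rfl

lemma epsK_append (u v : List κ) : epsK dg (u ++ v) = epsK dg u + epsK dg v := by
  simp [epsK]

variable (dg) in
lemma Lgen_eq_liePullback (P : List (Option κ) → Avs κ S) (dP : ℤ) (a : Option κ) (ms : List κ) :
    Lgen S dg P dP a ms = liePullback (shiftDeg dg) (dP - 1) P (genO S) a (ms.map some) := by
  rw [liePullback, splitSum₃_map, splitSum₃_map]
  simp only [← genBar_eq_linearCombination, ← genA_eq_linearCombination, wordDeg_shiftDeg_map_some]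
  rw [← sum_range_eq_splitSum₃_of_add_le, ← sum_range_eq_splitSum₃_of_le]
  rw [Lgen]
  congr 1
  refine Finset.sum_congr rfl fun i _ => Finset.sum_congr rfl fun j _ =>
    if_ctx_congr Iff.rfl (fun hji => ?_) fun _ => rfl
  have take_i : epsK dg (ms.take i)
      = epsK dg (ms.take j) + epsK dg ((ms.drop j).take (i - j)) := by
    rw [← epsK_append, ← List.take_add, Nat.add_sub_cancel' hji]
  have whole : epsK dg ms = epsK dg (ms.take i) + epsK dg (ms.drop i) := by
    rw [← epsK_append, List.take_append_drop]
  congr 2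
  simp only [muK, List.take_length, shiftDeg]
  rw [whole, take_i]
  ring

variable {P Q : List (Option κ) → Avs κ S} {dP dQ : ℤ}

variable (dg P dP) in
lemma Lop_genO_map_some (a : Option κ) (ms : List κ) :
    Lop S dg P dP (genO S a (ms.map some))
      = liePullback (shiftDeg dg) (dP - 1) P (genO S) a (ms.map some) := by
  rw [genO_map_some, ← Lgen_eq_liePullback]
  simp [Lop]

lemma Lop_genO (hP : IsReduced none (liePullback (shiftDeg dg) (dP - 1) P (genO S))) :
    (fun a w => Lop S dg P dP (genO S a w))
      = liePullback (shiftDeg dg) (dP - 1) P (genO S) := by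
  funext a w
  by_cases hw : none ∈ w
  · rw [isReduced_genO a w hw, hP a w hw, map_zero]
  · have lift (x : Option κ) (hx : x ∈ w) : ∃ y, some y = x :=
      Option.ne_none_iff_exists.1 fun h => hw (h ▸ hx)
    obtain ⟨ms, rfl⟩ : w ∈ Set.range (List.map some) := by
      rw [Set.range_list_map]
      exact lift
    exact Lop_genO_map_some dg P dP a ms

lemma Lop_commutator (hP : IsHomog S dg P dP) (hQ : IsHomog S dg Q dQ)
    (hPr : IsReduced none (liePullback (shiftDeg dg) (dP - 1) P (genO S)))
    (hQr : IsReduced none (liePullback (shiftDeg dg) (dQ - 1) Q (genO S))) :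
    Lop S dg P dP ∘ₗ Lop S dg Q dQ
        - sgn S ((dP - 1) * (dQ - 1)) • (Lop S dg Q dQ ∘ₗ Lop S dg P dP)
      = Lop S dg (gBr S dg P Q dP dQ) (dP + dQ - 1) := by
  have bracket : gBr S dg P Q dP dQ = coderPullback (shiftDeg dg) (dQ - 1) Q P
      - sgn S ((dP - 1) * (dQ - 1)) • coderPullback (shiftDeg dg) (dP - 1) P Q := by
    rw [← circC_eq_coderPullback, ← circC_eq_coderPullback]
    rfl
  refine lhom_ext' fun ⟨a, ms⟩ => LinearMap.ext_ring ?_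
  simp only [LinearMap.comp_apply, lsingle_apply, LinearMap.sub_apply, LinearMap.smul_apply,
    ← genO_map_some, Lop_genO_map_some, map_liePullback, Lop_genO hPr, Lop_genO hQr, bracket]
  rw [show dP + dQ - 1 - 1 = dP - 1 + (dQ - 1) by ring, ← liePullback_commutator
    hP.isHomogCochain hQ.isHomogCochain]
  rfl

end HochschildChains

end NC

open NC in
theorem statement1_general {S : Type} [CommRing S] {κ : Type} {dg : κ → ℤ}
    {b : List (Option κ) → Avs κ S} (hb : IsHomog S dg b 2)
    (hbu : IsStrictlyUnital (shiftDeg dg) none b) {P : List (Option κ) → Avs κ S} {dP : ℤ}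
    (hPn : IsNormalized S P) (hPh : IsHomog S dg P dP) :
    hochOp S dg b ∘ₗ Lop S dg P dP - sgn S (dP - 1) • (Lop S dg P dP ∘ₗ hochOp S dg b)
      = Lop S dg (fun w => circC S dg b P dP w - sgn S (dP - 1) • circC S dg P b 2 w)
          (dP + 1) := by
  have b_reduced : IsReduced none (liePullback (shiftDeg dg) (2 - 1) b (genO S)) :=
    hbu.isReduced_liePullback hb.isHomogCochain isReduced_genO
  have P_reduced : IsReduced none (liePullback (shiftDeg dg) (dP - 1) P (genO S)) :=
    isReduced_liePullback hPn isReduced_genO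
  have commutator := Lop_commutator hb hPh b_reduced P_reduced
  unfold gBr at commutator
  rwa [show ((2 : ℤ) - 1) * (dP - 1) = dP - 1 by ring,
    show (2 : ℤ) + dP - 1 = dP + 1 by ring] at commutator

open NC in
/-- Let `(A,b)` be a unital A∞-algebra over a field `k` of characteristic `0`
and `P` a homogeneous normalized Hochschild cochain of arity `p` and degree `dP = |P|` in
`C^•(A)`.  Then
`∂_Hoch ∘ L_P − (−1)^{|P|−1} L_P ∘ ∂_Hoch = L_{∂P}`,
where `∂P := b∘P − (−1)^{|P|−1} P∘b` is the Hochschild cochain differential; in particular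
`P ↦ L_P` is a chain map from the normalized shifted Hochschild cochain complex
`C̄^•(A)[1]` to the endomorphism complex `End_k(C_•(A))`. -/
theorem statement1 {k : Type} [Field k] [CharZero k] {κ : Type} (dg : κ → ℤ)
    (b : List (Option κ) → Avs κ k) (hb : IsUnitalAInf k dg b)
    (P : List (Option κ) → Avs κ k) (p : ℕ) (dP : ℤ)
    (hPa : HasArity k P p) (hPn : IsNormalized k P) (hPh : IsHomog k dg P dP) :
    hochOp k dg b ∘ₗ Lop k dg P dP -
        sgn k (dP - 1) • (Lop k dg P dP ∘ₗ hochOp k dg b) =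
      Lop k dg
        (fun ls => circC k dg b P dP ls - sgn k (dP - 1) • circC k dg P b 2 ls)
        (dP + 1) :=
  statement1_general hb.homog hb.toIsUnitalCurvedAInf.isStrictlyUnital hPn hPh
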